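/- For every complex number q with 0 < |q| < 1, one has ∑_{i,j,k,l ≥ 0} q^{i²+j²+k²+l²−ij−ik−il+jk+jl+i−k} / ((q;q)_i (q;q)_j (q;q)_k (q;q)_l) = (2/3) · (J_6² / (J_1² J_12)) · ( J_2⁵ J_{2,12} / (J_1² J_4² J_{1,6}) + 2 J_4³ / J_2² ). -/

import Mathlib

open scoped BigOperators

/-- The infinite q-Pochhammer symbol `(a; q)_∞ = ∏_{k=0}^∞ (1 - a q^k)`. -/
noncomputable def qPochInf (a q : ℂ) : ℂ := ∏' n : ℕ, (1 - a * q ^ n)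

/-- The finite q-Pochhammer symbol `(a; q)_n = ∏_{k=0}^{n-1} (1 - a q^k)`. -/
noncomputable def qPoch (a q : ℂ) (n : ℕ) : ℂ :=
  Finset.prod (Finset.range n) (fun k => 1 - a * q ^ k)

/-- `J_m = (q^m; q^m)_∞`. -/
noncomputable def J (q : ℂ) (m : ℕ) : ℂ := qPochInf (q ^ m) (q ^ m)

/-- `J_{a,m} = (q^a; q^m)_∞ (q^{m-a}; q^m)_∞ (q^m; q^m)_∞`. -/
noncomputable def Jam (q : ℂ) (a m : ℕ) : ℂ :=
  qPochInf (q ^ a) (q ^ m) * qPochInf (q ^ (m - a)) (q ^ m) * qPochInf (q ^ m) (q ^ m)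

/-!
Group the fourfold series along `i - j = c` and `k + l = m`: it becomes
`∑_{c,m} K(c) G(c - m) M(m)`, where `G(n) = q^(n (n + 1) / 2)`. By Durfee rectangles
`K(c) + K(c + 1) = G(c) / (q; q)_∞`. If `M'` denotes `M` with the extra weight `k - l`, then
`M'(m + 1) + M'(m) = M(m)`, so summation by parts turns the pairing of `K(c + 1)` with `M` into that
of `K(c) + K(c + 1)` with `M'`. What remains is a theta series of the hexagonal lattice carrying a
linear weight, and averaging over a symmetry of order three replaces this weight by `1 / 3`. Hence
the factor `1 - 1 / 3 = 2 / 3`. The unweighted hexagonal series splits by the parity of one index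
into products of one-dimensional theta series, which the Jacobi triple product evaluates.
-/

open Filter Topology

section Series

lemma summable_mul_of_norm_le {ι R : Type*} [NormedRing R] [CompleteSpace R] {f b : ι → R} {C : ℝ}
    (hf : Summable fun i => ‖f i‖) (hb : ∀ i, ‖b i‖ ≤ C) : Summable fun i => f i * b i :=
  (hf.mul_right C).of_norm_bounded fun i =>
    (norm_mul_le _ _).trans (mul_le_mul_of_nonneg_left (hb i) (norm_nonneg _))

lemma summable_comp_sub_right {G M : Type*} [AddGroup G] [AddCommMonoid M] [TopologicalSpace M]
    {f : G → M} (hf : Summable f) (a : G) : Summable fun x => f (x - a) :=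
  (Equiv.subRight a).summable_iff.2 hf

lemma tsum_comp_sub_right {G M : Type*} [AddGroup G] [AddCommMonoid M] [TopologicalSpace M]
    (f : G → M) (a : G) : ∑' x, f (x - a) = ∑' x, f x :=
  (Equiv.subRight a).tsum_eq f

lemma tsum_eq_tsum_tsum_of_equiv {α β γ E : Type*} [NormedAddCommGroup E] [CompleteSpace E]
    (e : β × γ ≃ α) {f : α → E} (hf : Summable f) :
    ∑' a, f a = ∑' b, ∑' c, f (e (b, c)) := by
  rw [← e.tsum_eq]
  exact (e.summable_iff.2 hf).tsum_prod

lemma tsum_eq_zero_of_comp_sub_left_eq_neg {G : Type*} [AddGroup G] {f : G → ℂ} (a : G)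
    (hf : ∀ x, f (a - x) = -f x) : ∑' x, f x = 0 := by
  refine self_eq_neg.1 ?_
  rw [← tsum_neg, ← (Equiv.subLeft a).tsum_eq]
  exact tsum_congr hf

lemma three_mul_tsum_eq_of_orbit_sum_eq {α : Type*} (e : α ≃ α) {f g : α → ℂ} (hf : Summable f)
    (h : ∀ x, f x + f (e x) + f (e (e x)) = g x) : 3 * ∑' x, f x = ∑' x, g x := by
  have s₁ : Summable fun x => f (e x) := e.summable_iff.2 hf
  have s₂ : Summable fun x => f (e (e x)) := e.summable_iff.2 s₁
  have h₁ : ∑' x, f (e x) = ∑' x, f x := e.tsum_eq f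
  have h₂ : ∑' x, f (e (e x)) = ∑' x, f x := (e.tsum_eq fun x => f (e x)).trans h₁
  rw [← tsum_congr h, (hf.add s₁).tsum_add s₂, hf.tsum_add s₁, h₁, h₂]
  ring

lemma tsum_int_even_add_odd {M : Type*} [AddCommMonoid M] [TopologicalSpace M] [ContinuousAdd M]
    [T2Space M] {f : ℤ → M} (he : Summable fun k => f (2 * k))
    (ho : Summable fun k => f (2 * k + 1)) :
    ∑' k, f (2 * k) + ∑' k, f (2 * k + 1) = ∑' n, f n := by
  have even_inj : Function.Injective fun k : ℤ => 2 * k := fun _ _ h => by simpa using h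
  have odd_inj : Function.Injective fun k : ℤ => 2 * k + 1 := fun _ _ h => by simpa using h
  have even_compl_odd : IsCompl (Set.range fun k : ℤ => 2 * k)
      (Set.range fun k : ℤ => 2 * k + 1) := by
    rw [range_two_mul ℤ, range_two_mul_add_one ℤ]
    exact Int.isCompl_even_odd
  exact ((even_inj.hasSum_range_iff.2 he.hasSum).add_isCompl even_compl_odd
    (odd_inj.hasSum_range_iff.2 ho.hasSum)).tsum_eq.symm

end Series

section TriangularPowers

/-- `q ^ (n (n + 1) / 2)`, the Gaussian weight of all the theta series below. The division is exact,
so that `triPow q` is symmetric about `-1/2`. -/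
noncomputable def triPow (q : ℂ) (n : ℤ) : ℂ := q ^ (n * (n + 1) / 2)

variable {q : ℂ}

lemma two_mul_triangular (n : ℤ) : 2 * (n * (n + 1) / 2) = n * (n + 1) :=
  Int.mul_ediv_cancel' (Int.even_mul_succ_self n).two_dvd

lemma triPow_neg_one_sub (q : ℂ) (n : ℤ) : triPow q (-1 - n) = triPow q n := by
  unfold triPow; congr 2; ring

lemma triPow_neg (q : ℂ) (n : ℤ) : triPow q (-n) = triPow q (n - 1) := by
  rw [← triPow_neg_one_sub q (n - 1)]; congr 1; ring

lemma triPow_add (hq0 : q ≠ 0) (m n : ℤ) :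
    triPow q (m + n) = triPow q m * triPow q n * q ^ (m * n) := by
  unfold triPow
  rw [← zpow_add₀ hq0, ← zpow_add₀ hq0]
  congr 1
  linarith [two_mul_triangular (m + n), two_mul_triangular m, two_mul_triangular n]

lemma triPow_eq_zpow_mul (hq0 : q ≠ 0) (n : ℤ) : triPow q n = q ^ n * triPow q (n - 1) := by
  have h := triPow_add hq0 (n - 1) 1
  have h_one : triPow q 1 = q := by simp [triPow]
  rw [sub_add_cancel, mul_one, h_one] at h
  rw [h, zpow_sub_one₀ hq0]
  field_simp

lemma triPow_add_mul_triPow_sub (hq0 : q ≠ 0) (b c j : ℤ) :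
    triPow q (b + c + j) * triPow q (b - j)
      = triPow q (b + c) * triPow q b * q ^ (j * (j + c)) := by
  unfold triPow
  rw [← zpow_add₀ hq0, ← zpow_add₀ hq0, ← zpow_add₀ hq0]
  congr 1
  linarith [two_mul_triangular (b + c + j), two_mul_triangular (b - j),
    two_mul_triangular (b + c), two_mul_triangular b]

lemma triPow_add_mul_triPow_sub_one (hq0 : q ≠ 0) (c j : ℤ) :
    triPow q (j + c) * triPow q (j - 1) = triPow q c * q ^ (j * (j + c)) := by
  have h := triPow_add_mul_triPow_sub hq0 0 c j
  have h_zero : triPow q 0 = 1 := by simp [triPow]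
  rwa [zero_add, zero_sub, triPow_neg, h_zero, mul_one, add_comm c j] at h

lemma norm_triPow_le_one (hq0 : q ≠ 0) (hq : ‖q‖ < 1) (n : ℤ) : ‖triPow q n‖ ≤ 1 := by
  rw [triPow, norm_zpow]
  refine zpow_le_one₀ (norm_pos_iff.2 hq0) hq.le ?_
  have := two_mul_triangular n
  rcases le_or_gt 0 n with hn | hn <;> nlinarith

lemma summable_pow_mul_triPow_mul_zpow (hq0 : q ≠ 0) (hq : ‖q‖ < 1) (k : ℕ) {z : ℂ} (hz : z ≠ 0) :
    Summable fun n : ℤ => (n : ℂ) ^ k * (triPow q n * z ^ n) := by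
  have hlog : Real.log ‖q‖ < 0 := Real.log_neg (norm_pos_iff.2 hq0) hq
  set T : ℝ := -Real.log ‖q‖ / (2 * Real.pi) with hT
  set S : ℝ := (-Real.log ‖q‖ / 2 + |Real.log ‖z‖|) / (2 * Real.pi) with hS
  have T_pos : 0 < T := div_pos (neg_pos.2 hlog) Real.two_pi_pos
  refine (summable_pow_mul_jacobiTheta₂_term_bound S T_pos k).of_norm_bounded fun n => ?_
  have norm_eq_exp : ‖triPow q n * z ^ n‖
      = Real.exp (Real.log ‖q‖ * (n * (n + 1) / 2) + Real.log ‖z‖ * n) := by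
    have tri_cast : ((n * (n + 1) / 2 : ℤ) : ℝ) = n * (n + 1) / 2 := by
      have : (2 * (n * (n + 1) / 2 : ℤ) : ℝ) = n * (n + 1) := by
        exact_mod_cast two_mul_triangular n
      linarith
    rw [norm_mul, triPow, norm_zpow, norm_zpow, Real.exp_add, ← tri_cast,
      ← Real.rpow_def_of_pos (norm_pos_iff.2 hq0), ← Real.rpow_def_of_pos (norm_pos_iff.2 hz),
      Real.rpow_intCast, Real.rpow_intCast]
  rw [norm_mul, norm_pow, Complex.norm_intCast, norm_eq_exp, Int.cast_abs]
  gcongr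
  have exponent_eq : -Real.pi * (T * n ^ 2 - 2 * S * |(n : ℝ)|)
      = Real.log ‖q‖ * n ^ 2 / 2 + (-Real.log ‖q‖ / 2 + |Real.log ‖z‖|) * |(n : ℝ)| := by
    rw [hT, hS]; field_simp; ring
  have log_z_le : Real.log ‖z‖ * n ≤ |Real.log ‖z‖| * |(n : ℝ)| := by
    rw [← abs_mul]; exact le_abs_self _
  rw [exponent_eq]
  nlinarith [neg_abs_le (n : ℝ)]

lemma summable_triPow_mul_zpow (hq0 : q ≠ 0) (hq : ‖q‖ < 1) {z : ℂ} (hz : z ≠ 0) :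
    Summable fun n : ℤ => triPow q n * z ^ n := by
  simpa using summable_pow_mul_triPow_mul_zpow hq0 hq 0 hz

lemma summable_triPow (hq0 : q ≠ 0) (hq : ‖q‖ < 1) : Summable (triPow q) := by
  simpa using summable_triPow_mul_zpow hq0 hq one_ne_zero

lemma summable_neg_mul_triPow (hq0 : q ≠ 0) (hq : ‖q‖ < 1) :
    Summable fun n : ℤ => -(n : ℂ) * triPow q n := by
  simpa using (summable_pow_mul_triPow_mul_zpow hq0 hq 1 one_ne_zero).neg

end TriangularPowers

section Pochhammer

variable {q : ℂ}

lemma summable_norm_neg_mul_pow (hq : ‖q‖ < 1) (a : ℂ) :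
    Summable fun n : ℕ => ‖-(a * q ^ n)‖ := by
  simpa only [norm_neg, norm_mul, norm_pow] using
    (summable_geometric_of_lt_one (norm_nonneg q) hq).mul_left ‖a‖

lemma multipliable_one_sub_mul_pow (hq : ‖q‖ < 1) (a : ℂ) :
    Multipliable fun n : ℕ => 1 - a * q ^ n := by
  simpa only [sub_eq_add_neg] using
    multipliable_one_add_of_summable (summable_norm_neg_mul_pow hq a)

lemma tendsto_qPoch (hq : ‖q‖ < 1) (a : ℂ) :
    Tendsto (qPoch a q) atTop (𝓝 (qPochInf a q)) :=
  (multipliable_one_sub_mul_pow hq a).tendsto_prod_tprod_nat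

lemma one_sub_mul_pow_ne_zero (hq : ‖q‖ < 1) {a : ℂ} (ha : ‖a‖ < 1) (n : ℕ) :
    1 - a * q ^ n ≠ 0 := by
  refine sub_ne_zero.2 fun h => ?_
  have : ‖a * q ^ n‖ < 1 := by
    rw [norm_mul, norm_pow]
    exact mul_lt_one_of_nonneg_of_lt_one_left (norm_nonneg a) ha
      (pow_le_one₀ (norm_nonneg q) hq.le)
  simp [← h] at this

lemma qPoch_ne_zero (hq : ‖q‖ < 1) {a : ℂ} (ha : ‖a‖ < 1) (n : ℕ) : qPoch a q n ≠ 0 :=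
  Finset.prod_ne_zero_iff.2 fun k _ => one_sub_mul_pow_ne_zero hq ha k

lemma qPochInf_ne_zero (hq : ‖q‖ < 1) {a : ℂ} (ha : ‖a‖ < 1) : qPochInf a q ≠ 0 := by
  have := tprod_one_add_ne_zero_of_summable (f := fun n : ℕ => -(a * q ^ n))
    (fun n => by simpa only [sub_eq_add_neg] using one_sub_mul_pow_ne_zero hq ha n)
    (summable_norm_neg_mul_pow hq a)
  simpa only [qPochInf, sub_eq_add_neg] using this

lemma qPochInf_eq_one_sub_mul (hq : ‖q‖ < 1) (a : ℂ) :
    qPochInf a q = (1 - a) * qPochInf (a * q) q := by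
  unfold qPochInf
  have shift (n : ℕ) : 1 - a * q ^ (n + 1) = 1 - a * q * q ^ n := by ring
  rw [tprod_eq_zero_mul' (by simpa only [shift] using multipliable_one_sub_mul_pow hq (a * q))]
  simp only [shift, pow_zero, mul_one]

lemma qPochInf_mul_qPochInf_neg (hq : ‖q‖ < 1) (a : ℂ) :
    qPochInf a q * qPochInf (-a) q = qPochInf (a ^ 2) (q ^ 2) := by
  unfold qPochInf
  rw [← (multipliable_one_sub_mul_pow hq a).tprod_mul (multipliable_one_sub_mul_pow hq (-a))]
  exact tprod_congr fun n => by ring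

lemma qPochInf_eq_prod_qPochInf_pow (hq : ‖q‖ < 1) (a : ℂ) {k : ℕ} (hk : k ≠ 0) :
    qPochInf a q = ∏ i ∈ Finset.range k, qPochInf (a * q ^ i) (q ^ k) := by
  have hqk : ‖q ^ k‖ < 1 := by rw [norm_pow]; exact pow_lt_one₀ (norm_nonneg q) hq hk
  have qPoch_mul (n : ℕ) :
      qPoch a q (k * n) = ∏ i ∈ Finset.range k, qPoch (a * q ^ i) (q ^ k) n := by
    induction n with
    | zero => simp [qPoch]
    | succ n ih =>
      unfold qPoch at ih ⊢
      simp only [Finset.prod_range_succ, Finset.prod_mul_distrib, Nat.mul_succ,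
        Finset.prod_range_add, ih]
      congr 1
      exact Finset.prod_congr rfl fun i _ => by ring
  refine tendsto_nhds_unique
    ((tendsto_qPoch hq a).comp (tendsto_id.const_mul_atTop' (Nat.pos_of_ne_zero hk))) ?_
  simpa only [Function.comp_def, id, qPoch_mul] using
    tendsto_finsetProd (Finset.range k) fun i _ => tendsto_qPoch hqk (a * q ^ i)

end Pochhammer

section ReciprocalPochhammer

/-- The reciprocal `1 / (q; q)_n`, extended by `0` to negative `n`. With this convention every
unilateral sum becomes a sum over `ℤ`, in which the index can be shifted freely. -/
noncomputable def invQPoch (q : ℂ) (n : ℤ) : ℂ := if 0 ≤ n then (qPoch q q n.toNat)⁻¹ else 0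

variable {q : ℂ}

lemma invQPoch_of_neg (q : ℂ) {n : ℤ} (hn : n < 0) : invQPoch q n = 0 := if_neg (by omega)

lemma invQPoch_natCast (q : ℂ) (n : ℕ) : invQPoch q n = (qPoch q q n)⁻¹ := by simp [invQPoch]

lemma invQPoch_zero (q : ℂ) : invQPoch q 0 = 1 := by simp [invQPoch, qPoch]

lemma invQPoch_sub_one (hq : ‖q‖ < 1) (n : ℤ) :
    invQPoch q (n - 1) = (1 - q ^ n) * invQPoch q n := by
  rcases lt_trichotomy n 0 with hn | rfl | hn
  · rw [invQPoch_of_neg q hn, invQPoch_of_neg q (by omega), mul_zero]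
  · rw [invQPoch_of_neg q (by omega)]; simp
  · obtain ⟨k, rfl⟩ : ∃ k : ℕ, n = (k + 1 : ℕ) := ⟨(n - 1).toNat, by omega⟩
    have hsucc : qPoch q q (k + 1) = qPoch q q k * (1 - q ^ (k + 1)) := by
      rw [qPoch, Finset.prod_range_succ, ← pow_succ', qPoch]
    have hne := qPoch_ne_zero hq hq (k + 1)
    rw [hsucc] at hne
    have hfactor : 1 - q ^ (k + 1) ≠ 0 := right_ne_zero_of_mul hne
    rw [invQPoch_natCast, zpow_natCast, hsucc, Nat.cast_succ, add_sub_cancel_right,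
      invQPoch_natCast]
    field_simp

lemma tendsto_invQPoch (hq : ‖q‖ < 1) :
    Tendsto (invQPoch q) atTop (𝓝 (qPochInf q q)⁻¹) := by
  rw [← Nat.map_cast_int_atTop, tendsto_map'_iff]
  simpa only [Function.comp_def, invQPoch_natCast] using
    (tendsto_qPoch hq q).inv₀ (qPochInf_ne_zero hq hq)

lemma exists_norm_invQPoch_le (hq : ‖q‖ < 1) : ∃ C : ℝ, ∀ n, ‖invQPoch q n‖ ≤ C := by
  have htends : Tendsto (fun n : ℕ => ‖invQPoch q n‖) atTop (𝓝 ‖(qPochInf q q)⁻¹‖) :=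
    ((tendsto_invQPoch hq).comp tendsto_natCast_atTop_atTop).norm
  obtain ⟨C, hC⟩ := htends.bddAbove_range
  have hC_nat (n : ℕ) : ‖invQPoch q n‖ ≤ C := hC ⟨n, rfl⟩
  refine ⟨C, fun n => ?_⟩
  rcases lt_or_ge n 0 with hn | hn
  · rw [invQPoch_of_neg q hn, norm_zero]
    exact (norm_nonneg _).trans (hC_nat 0)
  · lift n to ℕ using hn
    exact hC_nat n

lemma exists_norm_invQPoch_mul_invQPoch_le (hq : ‖q‖ < 1) :
    ∃ C : ℝ, ∀ m n, ‖invQPoch q m * invQPoch q n‖ ≤ C := by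
  obtain ⟨C, hC⟩ := exists_norm_invQPoch_le hq
  refine ⟨C * C, fun m n => ?_⟩
  rw [norm_mul]
  exact mul_le_mul (hC m) (hC n) (norm_nonneg _) ((norm_nonneg _).trans (hC 0))

end ReciprocalPochhammer

section Durfee

/-- The Durfee rectangle sum `∑_j q^(j (j + c)) / ((q;q)_j (q;q)_{j+c})`: partitions sorted by their
largest rectangle of shape `j × (j + c)`. -/
noncomputable def durfeeSum (q : ℂ) (c : ℤ) : ℂ :=
  ∑' j : ℤ, q ^ (j * (j + c)) * (invQPoch q j * invQPoch q (j + c))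

variable {q : ℂ}

lemma summable_durfeeSum (hq0 : q ≠ 0) (hq : ‖q‖ < 1) (c : ℤ) :
    Summable fun j : ℤ => q ^ (j * (j + c)) * (invQPoch q j * invQPoch q (j + c)) := by
  obtain ⟨C, hC⟩ := exists_norm_invQPoch_mul_invQPoch_le hq
  have summable_shift := summable_comp_sub_right (summable_triPow hq0 hq) 1
  have summable_weight : Summable fun j : ℤ => q ^ (j * (j + c)) := by
    have summable_mul := summable_mul_of_norm_le summable_shift.norm
      (b := fun j => triPow q (j + c)) fun j => norm_triPow_le_one hq0 hq (j + c)
    refine (summable_mul.mul_left (triPow q c)⁻¹).congr fun j => ?_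
    rw [mul_comm (triPow q (j - 1)), triPow_add_mul_triPow_sub_one hq0]
    exact inv_mul_cancel_left₀ (zpow_ne_zero _ hq0) _
  exact summable_mul_of_norm_le summable_weight.norm fun j => hC j (j + c)

lemma durfeeSum_neg (q : ℂ) (c : ℤ) : durfeeSum q (-c) = durfeeSum q c := by
  unfold durfeeSum
  rw [← (Equiv.addRight c).tsum_eq]
  refine tsum_congr fun j => ?_
  rw [Equiv.coe_addRight, add_neg_cancel_right, mul_comm (j + c), mul_comm (invQPoch q (j + c))]

lemma durfeeSum_sub_durfeeSum (hq0 : q ≠ 0) (hq : ‖q‖ < 1) (c : ℤ) :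
    durfeeSum q c - durfeeSum q (c + 1)
      = -q ^ (c + 1) * (durfeeSum q (c + 1) - durfeeSum q (c + 2)) := by
  have s₂ := summable_comp_sub_right (summable_durfeeSum hq0 hq (c + 2)) 1
  have s₀ := summable_durfeeSum hq0 hq c
  have s₁ := summable_durfeeSum hq0 hq (c + 1)
  simp only [durfeeSum]
  rw [← tsum_comp_sub_right (fun j => q ^ (j * (j + (c + 2))) * _) 1, ← s₀.tsum_sub s₁,
    ← s₁.tsum_sub s₂, ← tsum_mul_left]
  refine tsum_congr fun j => ?_
  have h₀ := invQPoch_sub_one hq j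
  have h₁ := invQPoch_sub_one hq (j + (c + 1))
  rw [← add_assoc, add_sub_cancel_right, add_assoc] at h₁
  have e₁ : q ^ (j * (j + (c + 1))) = q ^ (j * (j + c)) * q ^ j := by
    rw [← zpow_add₀ hq0]; congr 1; ring
  have e₂ : q ^ (c + 1) * q ^ ((j - 1) * (j + (c + 1))) = q ^ (j * (j + c)) := by
    rw [← zpow_add₀ hq0]; congr 1; ring
  have e₃ : q ^ (j + (c + 1)) = q ^ j * q ^ (c + 1) := zpow_add₀ hq0 _ _
  rw [show j - 1 + (c + 2) = j + (c + 1) by ring, h₀, h₁, e₁, e₃]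
  linear_combination (-(1 - q ^ j) * invQPoch q j * invQPoch q (j + (c + 1))) * e₂

lemma tendsto_durfeeSum (hq0 : q ≠ 0) (hq : ‖q‖ < 1) :
    Tendsto (fun c : ℕ => durfeeSum q c) atTop (𝓝 (qPochInf q q)⁻¹) := by
  obtain ⟨C, hC⟩ := exists_norm_invQPoch_mul_invQPoch_le hq
  have hpos := norm_pos_iff.2 hq0
  have term_le {j : ℤ} {c : ℕ} {n : ℤ} (h : 0 ≤ j → n ≤ j * (j + c)) :
      ‖q ^ (j * (j + c)) * (invQPoch q j * invQPoch q (j + c))‖ ≤ ‖q ^ n‖ * C := by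
    rcases lt_or_ge j 0 with hj | hj
    · rw [invQPoch_of_neg q hj, zero_mul, mul_zero, norm_zero]
      exact mul_nonneg (norm_nonneg _) ((norm_nonneg _).trans (hC 0 0))
    · rw [norm_mul, norm_zpow, norm_zpow]
      exact mul_le_mul (zpow_le_zpow_right_of_le_one₀ hpos hq.le (h hj)) (hC _ _)
        (norm_nonneg _) (zpow_nonneg hpos.le _)
  have lim_eq : (qPochInf q q)⁻¹ = ∑' j : ℤ, if j = 0 then (qPochInf q q)⁻¹ else 0 :=
    (tsum_ite_eq (0 : ℤ) fun _ => _).symm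
  rw [lim_eq]
  refine tendsto_tsum_of_dominated_convergence (bound := fun j : ℤ => ‖triPow q (j - 1)‖ * C)
    ((summable_comp_sub_right (summable_triPow hq0 hq) 1).norm.mul_right C)
    (fun j => ?_) (Eventually.of_forall fun c j => term_le fun hj => ?_)
  · rcases lt_trichotomy j 0 with hj | rfl | hj
    · simp only [invQPoch_of_neg q hj, zero_mul, mul_zero, if_neg hj.ne, tendsto_const_nhds]
    · simpa [invQPoch_zero, Function.comp_def] using
        (tendsto_invQPoch hq).comp tendsto_natCast_atTop_atTop
    · rw [if_neg hj.ne']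
      refine squeeze_zero_norm (fun c : ℕ => term_le (n := c) fun _ => ?_) ?_
      · nlinarith [mul_nonneg (Int.sub_nonneg_of_le hj) c.cast_nonneg]
      · simpa using (tendsto_pow_atTop_nhds_zero_of_lt_one (norm_nonneg q) hq).mul_const C
  · nlinarith [two_mul_triangular (j - 1), mul_nonneg hj c.cast_nonneg]

lemma durfeeSum_eq (hq0 : q ≠ 0) (hq : ‖q‖ < 1) (c : ℤ) :
    durfeeSum q c = (qPochInf q q)⁻¹ := by
  have tendsto_diff :
      Tendsto (fun n : ℕ => ‖durfeeSum q n - durfeeSum q (n + 1 : ℕ)‖) atTop (𝓝 0) := by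
    have hlim := tendsto_durfeeSum hq0 hq
    simpa using (hlim.sub ((tendsto_add_atTop_iff_nat 1).2 hlim)).norm
  have monotone_diff : Monotone fun n : ℕ => ‖durfeeSum q n - durfeeSum q (n + 1 : ℕ)‖ := by
    refine monotone_nat_of_le_succ fun n => ?_
    rw [Nat.cast_succ, durfeeSum_sub_durfeeSum hq0 hq, Nat.cast_succ, Nat.cast_succ, add_assoc,
      norm_mul, norm_neg, norm_zpow, one_add_one_eq_two]
    exact mul_le_of_le_one_left (norm_nonneg _)
      (zpow_le_one₀ (norm_pos_iff.2 hq0) hq.le (by positivity))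
  have succ_eq (n : ℕ) : durfeeSum q (n + 1 : ℕ) = durfeeSum q n :=
    (sub_eq_zero.1 (norm_le_zero_iff.1 (monotone_diff.ge_of_tendsto tendsto_diff n))).symm
  have const (n : ℕ) : durfeeSum q n = durfeeSum q (0 : ℕ) := by
    induction n with
    | zero => rfl
    | succ n ih => rw [succ_eq, ih]
  have eq_inv (n : ℕ) : durfeeSum q n = (qPochInf q q)⁻¹ := by
    refine tendsto_nhds_unique ?_ (tendsto_durfeeSum hq0 hq)
    simp only [const, tendsto_const_nhds]
  obtain ⟨n, rfl | rfl⟩ := c.eq_nat_or_neg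
  · exact eq_inv n
  · rw [durfeeSum_neg, eq_inv]

end Durfee

section JacobiTripleProduct

/-- Euler's series `∑_n q^(n (n - 1) / 2) z^n / (q;q)_n`. -/
noncomputable def eulerSeries (q z : ℂ) : ℂ := ∑' n : ℤ, triPow q (n - 1) * z ^ n * invQPoch q n

variable {q z : ℂ}

lemma summable_eulerSeries (hq0 : q ≠ 0) (hq : ‖q‖ < 1) (hz : z ≠ 0) :
    Summable fun n : ℤ => triPow q (n - 1) * z ^ n * invQPoch q n := by
  obtain ⟨C, hC⟩ := exists_norm_invQPoch_le hq
  have summable_shift : Summable fun n : ℤ => triPow q (n - 1) * z ^ n := by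
    refine ((summable_comp_sub_right (summable_triPow_mul_zpow hq0 hq hz) 1).mul_right z).congr
      fun n => ?_
    rw [mul_assoc, zpow_sub_one₀ hz, inv_mul_cancel_right₀ hz]
  exact summable_mul_of_norm_le summable_shift.norm hC

lemma eulerSeries_eq_one_add_mul (hq0 : q ≠ 0) (hq : ‖q‖ < 1) (hz : z ≠ 0) :
    eulerSeries q z = (1 + z) * eulerSeries q (z * q) := by
  have s₀ := summable_eulerSeries hq0 hq hz
  have s₁ := summable_eulerSeries hq0 hq (mul_ne_zero hz hq0)
  have sub_eq : eulerSeries q z - eulerSeries q (z * q) = z * eulerSeries q (z * q) := by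
    unfold eulerSeries
    rw [← s₀.tsum_sub s₁, ← tsum_comp_sub_right (fun n => triPow q (n - 1) * (z * q) ^ n * _) 1,
      ← tsum_mul_left]
    refine tsum_congr fun n => ?_
    rw [invQPoch_sub_one hq, triPow_eq_zpow_mul hq0 (n - 1), mul_zpow,
      mul_zpow, zpow_sub_one₀ hz]
    field_simp
  linear_combination sub_eq

lemma tendsto_eulerSeries_mul_pow (hq0 : q ≠ 0) (hq : ‖q‖ < 1) (hz : z ≠ 0) :
    Tendsto (fun N : ℕ => eulerSeries q (z * q ^ N)) atTop (𝓝 1) := by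
  have lim_eq : (1 : ℂ) = ∑' n : ℤ, if n = 0 then 1 else 0 := (tsum_ite_eq (0 : ℤ) fun _ => _).symm
  rw [lim_eq]
  refine tendsto_tsum_of_dominated_convergence (summable_eulerSeries hq0 hq hz).norm
    (fun n => ?_) (Eventually.of_forall fun N n => ?_)
  · rcases lt_trichotomy n 0 with hn | rfl | hn
    · simp only [invQPoch_of_neg q hn, mul_zero, if_neg hn.ne, tendsto_const_nhds]
    · simp [invQPoch_zero, triPow]
    · lift n to ℕ using hn.le
      have hn' : n ≠ 0 := by omega
      have tendsto_arg : Tendsto (fun N : ℕ => z * q ^ N) atTop (𝓝 0) := by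
        simpa using (tendsto_pow_atTop_nhds_zero_of_norm_lt_one hq).const_mul z
      simpa [hn'] using
        ((tendsto_arg.pow n).const_mul (triPow q (n - 1))).mul_const (invQPoch q n)
  · rcases lt_or_ge n 0 with hn | hn
    · simp only [invQPoch_of_neg q hn, mul_zero, le_refl]
    · lift n to ℕ using hn
      simp only [norm_mul, norm_pow, zpow_natCast]
      gcongr
      exact mul_le_of_le_one_right (norm_nonneg z) (pow_le_one₀ (norm_nonneg q) hq.le)

lemma eulerSeries_eq_qPochInf (hq0 : q ≠ 0) (hq : ‖q‖ < 1) (hz : z ≠ 0) :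
    eulerSeries q z = qPochInf (-z) q := by
  have eq_mul (N : ℕ) : eulerSeries q z = qPoch (-z) q N * eulerSeries q (z * q ^ N) := by
    induction N with
    | zero => simp [qPoch]
    | succ N ih =>
      rw [ih, eulerSeries_eq_one_add_mul hq0 hq (mul_ne_zero hz (pow_ne_zero N hq0)), qPoch, qPoch,
        Finset.prod_range_succ, mul_assoc z, ← pow_succ]
      ring
  have hlim := (tendsto_qPoch hq (-z)).mul (tendsto_eulerSeries_mul_pow hq0 hq hz)
  rw [mul_one] at hlim
  exact tendsto_nhds_unique (tendsto_const_nhds.congr eq_mul) hlim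

/-- The pair `(i, j)` parametrised by `(i - j, j)`. -/
def diffEquiv : ℤ × ℤ ≃ ℤ × ℤ where
  toFun x := (x.2 + x.1, x.2)
  invFun x := (x.1 - x.2, x.2)
  left_inv x := by simp
  right_inv x := by simp

theorem tsum_triPow_mul_zpow (hq0 : q ≠ 0) (hq : ‖q‖ < 1) (hz : z ≠ 0) :
    ∑' n : ℤ, triPow q n * z ^ n = qPochInf (-(z * q)) q * qPochInf (-z⁻¹) q * qPochInf q q := by
  have hzq := mul_ne_zero hz hq0
  have hzi := inv_ne_zero hz
  have s₁ := summable_eulerSeries hq0 hq hzq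
  have s₂ := summable_eulerSeries hq0 hq hzi
  have s₁₂ := summable_mul_of_summable_norm s₁.norm s₂.norm
  have term_eq (c j : ℤ) :
      triPow q (j + c - 1) * (z * q) ^ (j + c) * invQPoch q (j + c) *
          (triPow q (j - 1) * z⁻¹ ^ j * invQPoch q j)
        = triPow q c * z ^ c * (q ^ (j * (j + c)) * (invQPoch q j * invQPoch q (j + c))) := by
    have hweight := triPow_add_mul_triPow_sub_one hq0 c j
    rw [triPow_eq_zpow_mul hq0 (j + c)] at hweight
    have hz_pow : z ^ (j + c) * z⁻¹ ^ j = z ^ c := by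
      rw [zpow_add₀ hz, inv_zpow, mul_right_comm, mul_inv_cancel₀ (zpow_ne_zero j hz), one_mul]
    rw [mul_zpow, ← hz_pow]
    linear_combination (z ^ (j + c) * z⁻¹ ^ j * invQPoch q j * invQPoch q (j + c)) * hweight
  have euler_mul : qPochInf (-(z * q)) q * qPochInf (-z⁻¹) q
      = (∑' n : ℤ, triPow q n * z ^ n) * (qPochInf q q)⁻¹ := by
    rw [← eulerSeries_eq_qPochInf hq0 hq hzq, ← eulerSeries_eq_qPochInf hq0 hq hzi, eulerSeries,
      eulerSeries, tsum_mul_tsum_of_summable_norm s₁.norm s₂.norm,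
      tsum_eq_tsum_tsum_of_equiv diffEquiv s₁₂, ← tsum_mul_right]
    refine tsum_congr fun c => ?_
    rw [← durfeeSum_eq hq0 hq c, durfeeSum, ← tsum_mul_left]
    exact tsum_congr fun j => term_eq c j
  rw [euler_mul, inv_mul_cancel_right₀ (qPochInf_ne_zero hq hq)]

end JacobiTripleProduct

section DiagonalSums

/-- The part `i - j = c` of the sum over `i` and `j`. -/
noncomputable def diffSum (q : ℂ) (c : ℤ) : ℂ :=
  ∑' j : ℤ, triPow q (j + c) * triPow q j * (invQPoch q (j + c) * invQPoch q j)

/-- The part `k + l = m` of the sum over `k` and `l`, with weight `γ (l - k)`. -/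
noncomputable def antidiagSum (q : ℂ) (γ : ℤ → ℂ) (m : ℤ) : ℂ :=
  ∑' k : ℤ, γ (m - 2 * k) * (invQPoch q k * invQPoch q (m - k))

variable {q : ℂ} {γ : ℤ → ℂ}

lemma summable_diffSum_uncurry (hq0 : q ≠ 0) (hq : ‖q‖ < 1) :
    Summable fun x : ℤ × ℤ =>
      triPow q (x.2 + x.1) * triPow q x.2 * (invQPoch q (x.2 + x.1) * invQPoch q x.2) := by
  obtain ⟨C, hC⟩ := exists_norm_invQPoch_mul_invQPoch_le hq
  have hG := (summable_triPow hq0 hq).norm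
  have summable_ij := summable_mul_of_norm_le (summable_mul_of_summable_norm hG hG).norm
    (b := fun x : ℤ × ℤ => invQPoch q x.1 * invQPoch q x.2) fun x => hC x.1 x.2
  exact diffEquiv.summable_iff.2 summable_ij

lemma diffSum_add_diffSum (hq0 : q ≠ 0) (hq : ‖q‖ < 1) (c : ℤ) :
    diffSum q c + diffSum q (c + 1) = triPow q c * (qPochInf q q)⁻¹ := by
  have s₀ := (summable_diffSum_uncurry hq0 hq).prod_factor c
  have s₁ := summable_comp_sub_right ((summable_diffSum_uncurry hq0 hq).prod_factor (c + 1)) 1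
  rw [← durfeeSum_eq hq0 hq c, diffSum, diffSum, durfeeSum,
    ← tsum_comp_sub_right (fun j => triPow q (j + (c + 1)) * _ * _) 1, ← s₀.tsum_add s₁,
    ← tsum_mul_left]
  refine tsum_congr fun j => ?_
  rw [sub_add_add_cancel, invQPoch_sub_one hq, triPow_eq_zpow_mul hq0 j]
  linear_combination
    (invQPoch q j * invQPoch q (j + c)) * triPow_add_mul_triPow_sub_one hq0 c j

lemma summable_antidiagSum (hq : ‖q‖ < 1) (hγ : Summable γ) (m : ℤ) :
    Summable fun k : ℤ => γ (m - 2 * k) * (invQPoch q k * invQPoch q (m - k)) := by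
  obtain ⟨C, hC⟩ := exists_norm_invQPoch_mul_invQPoch_le hq
  have summable_weight : Summable fun k : ℤ => γ (m - 2 * k) :=
    hγ.comp_injective fun _ _ h => by simpa using h
  exact summable_mul_of_norm_le summable_weight.norm fun k => hC k (m - k)

lemma exists_norm_antidiagSum_le (hq : ‖q‖ < 1) (hγ : Summable γ) :
    ∃ C : ℝ, ∀ m, ‖antidiagSum q γ m‖ ≤ C := by
  obtain ⟨C, hC⟩ := exists_norm_invQPoch_mul_invQPoch_le hq
  have hC_nonneg : 0 ≤ C := (norm_nonneg _).trans (hC 0 0)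
  refine ⟨∑' t : ℤ, ‖γ t‖ * C, fun m => ?_⟩
  have hsum := (summable_antidiagSum hq hγ m).norm
  refine (norm_tsum_le_tsum_norm hsum).trans <|
    hsum.tsum_le_tsum_of_inj (fun k : ℤ => m - 2 * k) (fun _ _ h => by simpa using h)
      (fun t _ => mul_nonneg (norm_nonneg (γ t)) hC_nonneg) (fun k => ?_) (hγ.norm.mul_right C)
  rw [norm_mul]
  exact mul_le_mul_of_nonneg_left (hC _ _) (norm_nonneg _)

lemma triPow_sub_mul_invQPoch_comm (hq0 : q ≠ 0) (hq : ‖q‖ < 1) (k l : ℤ) :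
    triPow q (l - k) * (invQPoch q k * invQPoch q l)
        + triPow q (l - k - 1) * (invQPoch q k * invQPoch q (l - 1))
      = triPow q (k - l) * (invQPoch q l * invQPoch q k)
        + triPow q (k - l - 1) * (invQPoch q l * invQPoch q (k - 1)) := by
  have reflect : triPow q (k - l) = triPow q (l - k - 1) := by rw [← triPow_neg, neg_sub]
  have reflect' : triPow q (k - l - 1) = triPow q (l - k) := by rw [← triPow_neg, neg_sub]
  have zpow_split : q ^ l = q ^ (l - k) * q ^ k := by rw [← zpow_add₀ hq0, sub_add_cancel]
  rw [reflect, reflect', triPow_eq_zpow_mul hq0 (l - k), invQPoch_sub_one hq, invQPoch_sub_one hq,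
    zpow_split]
  ring

lemma antidiagSum_neg_mul_triPow_add (hq0 : q ≠ 0) (hq : ‖q‖ < 1) (m : ℤ) :
    antidiagSum q (fun t => -(t : ℂ) * triPow q t) (m + 1)
        + antidiagSum q (fun t => -(t : ℂ) * triPow q t) m
      = antidiagSum q (triPow q) m := by
  have s := summable_antidiagSum hq (summable_triPow hq0 hq) m
  have s₀ := summable_antidiagSum hq (summable_neg_mul_triPow hq0 hq) m
  have s₁ := summable_antidiagSum hq (summable_neg_mul_triPow hq0 hq) (m + 1)
  refine sub_eq_zero.1 ?_
  simp only [antidiagSum]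
  rw [← s₁.tsum_add s₀, ← (s₁.add s₀).tsum_sub s]
  refine tsum_eq_zero_of_comp_sub_left_eq_neg (m + 1) fun k => ?_
  -- Each summand is `2 k - m - 1`, odd under `k ↦ m + 1 - k`, times the two symmetric terms of
  -- `triPow_sub_mul_invQPoch_comm`.
  have hcomm := triPow_sub_mul_invQPoch_comm hq0 hq k (m + 1 - k)
  rw [show m + 1 - k - k = m + 1 - 2 * k by ring, show m + 1 - 2 * k - 1 = m - 2 * k by ring,
    show m + 1 - k - 1 = m - k by ring, show k - (m + 1 - k) = m + 1 - 2 * (m + 1 - k) by ring,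
    show m + 1 - 2 * (m + 1 - k) - 1 = m - 2 * (m + 1 - k) by ring] at hcomm
  rw [sub_sub_cancel, show m - (m + 1 - k) = k - 1 by ring]
  push_cast
  linear_combination (2 * (k : ℂ) - m - 1) * hcomm

end DiagonalSums

section HexagonalTheta

/-- The theta series `∑_{a,b} γ(a) q^(b (b + 1) / 2) q^((a + b) (a + b + 1) / 2)` of the hexagonal
lattice, with the factor attached to `a` left free; it is `q^(a (a + 1) / 2)` for the plain series
and carries an extra linear factor for the weighted one. -/
noncomputable def hexTheta (q : ℂ) (γ : ℤ → ℂ) : ℂ :=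
  ∑' x : ℤ × ℤ, γ x.1 * triPow q x.2 * triPow q (x.1 + x.2)

/-- The symmetry of order three `(a, b) ↦ (b, -1 - a - b)` of the hexagonal theta series. -/
def hexRotation : ℤ × ℤ ≃ ℤ × ℤ where
  toFun x := (x.2, -1 - x.1 - x.2)
  invFun x := (-1 - x.1 - x.2, x.1)
  left_inv x := by ext <;> simp
  right_inv x := by ext <;> dsimp; ring

variable {q : ℂ}

lemma summable_hexTheta (hq0 : q ≠ 0) (hq : ‖q‖ < 1) {γ : ℤ → ℂ} (hγ : Summable γ) :
    Summable fun x : ℤ × ℤ => γ x.1 * triPow q x.2 * triPow q (x.1 + x.2) :=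
  summable_mul_of_norm_le
    (summable_mul_of_summable_norm hγ.norm (summable_triPow hq0 hq).norm).norm
    fun x => norm_triPow_le_one hq0 hq (x.1 + x.2)

lemma three_mul_hexTheta_neg_mul_triPow (hq0 : q ≠ 0) (hq : ‖q‖ < 1) :
    3 * hexTheta q (fun t => -(t : ℂ) * triPow q t) = hexTheta q (triPow q) := by
  have s := summable_hexTheta hq0 hq (summable_neg_mul_triPow hq0 hq)
  unfold hexTheta
  refine three_mul_tsum_eq_of_orbit_sum_eq hexRotation s fun ⟨a, b⟩ => ?_
  have h₁ : triPow q (-1 - a - b) = triPow q (a + b) := by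
    rw [← triPow_neg_one_sub q (a + b), sub_sub]
  have h₂ : triPow q (b + (-1 - a - b)) = triPow q a := by
    rw [← triPow_neg_one_sub q a]; congr 1; ring
  have h₃ : triPow q (-1 - b - (-1 - a - b)) = triPow q a := by congr 1; ring
  have h₄ : triPow q (-1 - a - b + (-1 - b - (-1 - a - b))) = triPow q b := by
    rw [← triPow_neg_one_sub q b]; congr 1; ring
  simp only [hexRotation, Equiv.coe_fn_mk, h₁, h₂, h₃, h₄]
  -- The three linear weights `-a`, `-b` and `1 + a + b` add up to `1`.
  push_cast
  ring

end HexagonalTheta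

section ConvolutionPairing

/-- The bilinear pairing `∑_{c,m} f(c) w(c - m) h(m)` of two sequences through the kernel `w`. -/
noncomputable def convPairing (w f h : ℤ → ℂ) : ℂ :=
  ∑' x : ℤ × ℤ, f x.1 * w (x.1 - x.2) * h x.2

variable {q : ℂ} {w f f' h γ : ℤ → ℂ} {C : ℝ}

lemma summable_convPairing (hf : Summable f) (hw : Summable w) (hh : ∀ m, ‖h m‖ ≤ C) :
    Summable fun x : ℤ × ℤ => f x.1 * w (x.1 - x.2) * h x.2 := by
  have summable_mul := (summable_mul_of_summable_norm hf.norm hw.norm).comp_injective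
    (i := fun x : ℤ × ℤ => (x.1, x.1 - x.2)) fun x y hxy => by
      simp only [Prod.mk.injEq] at hxy
      ext <;> omega
  exact summable_mul_of_norm_le summable_mul.norm fun x => hh x.2

lemma convPairing_add_left (hf : Summable f) (hf' : Summable f') (hw : Summable w)
    (hh : ∀ m, ‖h m‖ ≤ C) :
    convPairing w (fun c => f c + f' c) h = convPairing w f h + convPairing w f' h := by
  unfold convPairing
  rw [← (summable_convPairing hf hw hh).tsum_add (summable_convPairing hf' hw hh)]
  exact tsum_congr fun x => by ring

lemma convPairing_mul_right (w f h : ℤ → ℂ) (a : ℂ) :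
    convPairing w (fun c => f c * a) h = convPairing w f h * a := by
  unfold convPairing
  rw [← tsum_mul_right]
  exact tsum_congr fun x => by ring

lemma convPairing_add_shift_right (hf : Summable f) (hw : Summable w) (hh : ∀ m, ‖h m‖ ≤ C) :
    convPairing w f (fun m => h (m + 1) + h m) = convPairing w (fun c => f (c - 1) + f c) h := by
  have s₀ := summable_convPairing hf hw hh
  have s₁ := summable_convPairing hf hw (h := fun m => h (m + 1)) fun m => hh (m + 1)
  have shift : ∑' x : ℤ × ℤ, f x.1 * w (x.1 - x.2) * h (x.2 + 1)
      = convPairing w (fun c => f (c - 1)) h := by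
    unfold convPairing
    rw [← tsum_comp_sub_right _ ((1, 1) : ℤ × ℤ)]
    simp only [Prod.fst_sub, Prod.snd_sub, sub_sub_sub_cancel_right, sub_add_cancel]
  rw [convPairing_add_left (summable_comp_sub_right hf 1) hf hw hh, ← shift, convPairing,
    convPairing, ← s₁.tsum_add s₀]
  exact tsum_congr fun x => by ring

/-- The reparametrisation `c = b + t + k`, `m = t + 2 k` that brings out a Durfee sum over `k`. -/
def durfeeEquiv : (ℤ × ℤ) × ℤ ≃ (ℤ × ℤ) × ℤ where
  toFun x := ((x.1.2 + x.1.1 + x.2, x.1.1 + 2 * x.2), x.2)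
  invFun x := ((x.1.2 - 2 * x.2, x.1.1 - x.1.2 + x.2), x.2)
  left_inv x := by ext <;> dsimp <;> ring
  right_inv x := by ext <;> dsimp <;> ring

lemma summable_triPow_mul_antidiagSum (hq0 : q ≠ 0) (hq : ‖q‖ < 1) (hγ : Summable γ) :
    Summable fun x : (ℤ × ℤ) × ℤ => triPow q x.1.1 * triPow q (x.1.1 - x.1.2) *
      (γ (x.1.2 - 2 * x.2) * (invQPoch q x.2 * invQPoch q (x.1.2 - x.2))) := by
  obtain ⟨C, hC⟩ := exists_norm_invQPoch_mul_invQPoch_le hq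
  have hG := (summable_triPow hq0 hq).norm
  have summable_weight := (summable_mul_of_summable_norm
    (summable_mul_of_summable_norm hG hG).norm hγ.norm).comp_injective
    (i := fun x : (ℤ × ℤ) × ℤ => ((x.1.1, x.1.1 - x.1.2), x.1.2 - 2 * x.2)) fun x y hxy => by
      simp only [Prod.mk.injEq] at hxy
      ext <;> omega
  refine (summable_mul_of_norm_le summable_weight.norm
    fun x => hC x.2 (x.1.2 - x.2)).congr fun x => ?_
  exact mul_assoc _ _ _

lemma convPairing_triPow_antidiagSum (hq0 : q ≠ 0) (hq : ‖q‖ < 1) (hγ : Summable γ) :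
    convPairing (triPow q) (triPow q) (antidiagSum q γ)
      = hexTheta q γ * (qPochInf q q)⁻¹ := by
  have s := summable_triPow_mul_antidiagSum hq0 hq hγ
  have pairing_eq : convPairing (triPow q) (triPow q) (antidiagSum q γ)
      = ∑' x : (ℤ × ℤ) × ℤ, triPow q x.1.1 * triPow q (x.1.1 - x.1.2) *
        (γ (x.1.2 - 2 * x.2) * (invQPoch q x.2 * invQPoch q (x.1.2 - x.2))) := by
    rw [s.tsum_prod]
    exact tsum_congr fun x => tsum_mul_left.symm
  rw [pairing_eq, tsum_eq_tsum_tsum_of_equiv durfeeEquiv s, hexTheta, ← tsum_mul_right]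
  refine tsum_congr fun ⟨t, b⟩ => ?_
  rw [← durfeeSum_eq hq0 hq t, durfeeSum, ← tsum_mul_left]
  refine tsum_congr fun k => ?_
  have hweight := triPow_add_mul_triPow_sub hq0 b t k
  simp only [durfeeEquiv, Equiv.coe_fn_mk]
  rw [show b + t + k - (t + 2 * k) = b - k by ring, show t + 2 * k - k = k + t by ring,
    add_sub_cancel_right, add_comm t b]
  linear_combination (γ t * (invQPoch q k * invQPoch q (k + t))) * hweight

lemma convPairing_diffSum_antidiagSum (hq0 : q ≠ 0) (hq : ‖q‖ < 1) :
    convPairing (triPow q) (diffSum q) (antidiagSum q (triPow q))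
      = 2 / 3 * hexTheta q (triPow q) * (qPochInf q q)⁻¹ ^ 2 := by
  have hG := summable_triPow hq0 hq
  have hG' := summable_neg_mul_triPow hq0 hq
  have hK : Summable (diffSum q) := (summable_diffSum_uncurry hq0 hq).prod
  have hK' : Summable fun c => diffSum q (c + 1) := hK.comp_injective (add_left_injective 1)
  obtain ⟨C, hC⟩ := exists_norm_antidiagSum_le hq hG
  obtain ⟨C', hC'⟩ := exists_norm_antidiagSum_le hq hG'
  have pairing_eq {γ : ℤ → ℂ} (hγ : Summable γ) :
      convPairing (triPow q) (fun c => diffSum q c + diffSum q (c + 1)) (antidiagSum q γ)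
        = hexTheta q γ * (qPochInf q q)⁻¹ ^ 2 := by
    simp only [diffSum_add_diffSum hq0 hq]
    rw [convPairing_mul_right, convPairing_triPow_antidiagSum hq0 hq hγ, sq, mul_assoc]
  have shifted_eq :
      convPairing (triPow q) (fun c => diffSum q (c + 1)) (antidiagSum q (triPow q))
        = hexTheta q (fun t => -(t : ℂ) * triPow q t) * (qPochInf q q)⁻¹ ^ 2 := by
    rw [← funext (antidiagSum_neg_mul_triPow_add hq0 hq), convPairing_add_shift_right hK' hG hC',
      ← pairing_eq hG']
    simp only [sub_add_cancel]
  have sum_eq := pairing_eq hG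
  rw [convPairing_add_left hK hK' hG hC, shifted_eq] at sum_eq
  linear_combination sum_eq
    - (qPochInf q q)⁻¹ ^ 2 / 3 * three_mul_hexTheta_neg_mul_triPow hq0 hq

end ConvolutionPairing

section FourfoldSum

/-- The summand of the fourfold series, extended by `0` to `ℤ⁴`. -/
noncomputable def fourfoldTerm (q : ℂ) (x : ℤ × ℤ × ℤ × ℤ) : ℂ :=
  match x with
  | (i, j, k, l) =>
    q ^ (i ^ 2 + j ^ 2 + k ^ 2 + l ^ 2 - i * j - i * k - i * l + j * k + j * l + i - k) *
      (invQPoch q i * invQPoch q j * (invQPoch q k * invQPoch q l))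

/-- The reparametrisation of `ℤ⁴` by the diagonals `c = i - j` and `m = k + l`. -/
def diagonalsEquiv : (ℤ × ℤ) × (ℤ × ℤ) ≃ ℤ × ℤ × ℤ × ℤ where
  toFun x := (x.2.1 + x.1.1, x.2.1, x.2.2, x.1.2 - x.2.2)
  invFun x := ((x.1 - x.2.1, x.2.2.1 + x.2.2.2), (x.2.1, x.2.2.1))
  left_inv x := by ext <;> simp
  right_inv x := by ext <;> simp

variable {q : ℂ}

lemma fourfoldTerm_eq_triPow_mul (hq0 : q ≠ 0) (i j k l : ℤ) :
    fourfoldTerm q (i, j, k, l)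
      = triPow q i * triPow q j * (triPow q (i - j - k - l) * triPow q (l - k)) *
        (invQPoch q i * invQPoch q j * (invQPoch q k * invQPoch q l)) := by
  simp only [fourfoldTerm, triPow, ← zpow_add₀ hq0]
  congr 2
  linarith [two_mul_triangular i, two_mul_triangular j, two_mul_triangular (i - j - k - l),
    two_mul_triangular (l - k)]

lemma fourfoldTerm_natCast (q : ℂ) (i j k l : ℕ) :
    fourfoldTerm q (i, j, k, l)
      = q ^ ((i : ℤ) ^ 2 + (j : ℤ) ^ 2 + (k : ℤ) ^ 2 + (l : ℤ) ^ 2 - (i : ℤ) * (j : ℤ)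
          - (i : ℤ) * (k : ℤ) - (i : ℤ) * (l : ℤ) + (j : ℤ) * (k : ℤ) + (j : ℤ) * (l : ℤ)
          + (i : ℤ) - (k : ℤ)) /
        (qPoch q q i * qPoch q q j * qPoch q q k * qPoch q q l) := by
  simp only [fourfoldTerm, invQPoch_natCast, div_eq_mul_inv, mul_inv]
  ring

lemma summable_fourfoldTerm (hq0 : q ≠ 0) (hq : ‖q‖ < 1) : Summable (fourfoldTerm q) := by
  obtain ⟨C, hC⟩ := exists_norm_invQPoch_mul_invQPoch_le hq
  have hG := (summable_triPow hq0 hq).norm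
  have hG₂ := (summable_mul_of_summable_norm hG hG).norm
  have weight_inj : Function.Injective fun x : ℤ × ℤ × ℤ × ℤ =>
      ((x.1, x.2.1), (x.1 - x.2.1 - x.2.2.1 - x.2.2.2, x.2.2.2 - x.2.2.1)) := fun x y hxy => by
    simp only [Prod.mk.injEq] at hxy
    ext <;> omega
  have summable_weight := (summable_mul_of_summable_norm hG₂ hG₂).comp_injective weight_inj
  have norm_invQPoch_le (x : ℤ × ℤ × ℤ × ℤ) : ‖invQPoch q x.1 * invQPoch q x.2.1 *
      (invQPoch q x.2.2.1 * invQPoch q x.2.2.2)‖ ≤ C * C :=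
    (norm_mul_le _ _).trans
      (mul_le_mul (hC x.1 x.2.1) (hC x.2.2.1 x.2.2.2) (norm_nonneg _)
        ((norm_nonneg _).trans (hC 0 0)))
  refine (summable_mul_of_norm_le summable_weight.norm norm_invQPoch_le).congr
    fun ⟨i, j, k, l⟩ => ?_
  rw [fourfoldTerm_eq_triPow_mul hq0]
  rfl

lemma tsum_fourfoldTerm (hq0 : q ≠ 0) (hq : ‖q‖ < 1) :
    ∑' x, fourfoldTerm q x = convPairing (triPow q) (diffSum q) (antidiagSum q (triPow q)) := by
  rw [tsum_eq_tsum_tsum_of_equiv diagonalsEquiv (summable_fourfoldTerm hq0 hq), convPairing]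
  refine tsum_congr fun ⟨c, m⟩ => ?_
  rw [mul_right_comm, diffSum, antidiagSum, tsum_mul_tsum_of_summable_norm
    ((summable_diffSum_uncurry hq0 hq).prod_factor c).norm
    (summable_antidiagSum hq (summable_triPow hq0 hq) m).norm, ← tsum_mul_right]
  refine tsum_congr fun ⟨j, k⟩ => ?_
  simp only [diagonalsEquiv, Equiv.coe_fn_mk, fourfoldTerm_eq_triPow_mul hq0]
  rw [show j + c - j - k - (m - k) = c - m by ring, show m - k - k = m - 2 * k by ring]
  ring

lemma tsum_fourfoldTerm_natCast (q : ℂ) :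
    ∑' x : ℕ × ℕ × ℕ × ℕ, fourfoldTerm q (x.1, x.2.1, x.2.2.1, x.2.2.2)
      = ∑' x, fourfoldTerm q x := by
  have toNat_eq {n : ℤ} (hn : invQPoch q n ≠ 0) : (n.toNat : ℤ) = n :=
    Int.toNat_of_nonneg (not_lt.1 fun h => hn (invQPoch_of_neg q h))
  have cast_inj : Function.Injective fun x : ℕ × ℕ × ℕ × ℕ =>
      ((x.1 : ℤ), (x.2.1 : ℤ), (x.2.2.1 : ℤ), (x.2.2.2 : ℤ)) :=
    Nat.cast_injective.prodMap
      (Nat.cast_injective.prodMap (Nat.cast_injective.prodMap Nat.cast_injective))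
  refine cast_inj.tsum_eq ?_
  rintro ⟨i, j, k, l⟩ h
  simp only [Function.mem_support, fourfoldTerm, mul_ne_zero_iff] at h
  obtain ⟨-, ⟨hi, hj⟩, hk, hl⟩ := h
  exact ⟨(i.toNat, j.toNat, k.toNat, l.toNat), by
    simp only [toNat_eq hi, toNat_eq hj, toNat_eq hk, toNat_eq hl]⟩

end FourfoldSum

section ThetaProducts

/-- The product `(-q^a; q^m)_∞ (-q^(m-a); q^m)_∞ (q^m; q^m)_∞`, usually written with a bar over
`J_{a,m}`. As in `Jam`, the subtraction is only meaningful for `a ≤ m`. -/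
noncomputable def JBar (q : ℂ) (a m : ℕ) : ℂ :=
  qPochInf (-q ^ a) (q ^ m) * qPochInf (-q ^ (m - a)) (q ^ m) * qPochInf (q ^ m) (q ^ m)

variable {q : ℂ} {a m : ℕ}

lemma norm_pow_lt_one (hq : ‖q‖ < 1) (hm : m ≠ 0) : ‖q ^ m‖ < 1 := by
  rw [norm_pow]
  exact pow_lt_one₀ (norm_nonneg q) hq hm

lemma J_ne_zero (hq : ‖q‖ < 1) (hm : m ≠ 0) : J q m ≠ 0 :=
  qPochInf_ne_zero (norm_pow_lt_one hq hm) (norm_pow_lt_one hq hm)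

lemma Jam_ne_zero (hq : ‖q‖ < 1) (ha : a ≠ 0) (ham : a < m) : Jam q a m ≠ 0 := by
  have hqm : ‖q ^ m‖ < 1 := norm_pow_lt_one hq (by omega)
  exact mul_ne_zero
    (mul_ne_zero (qPochInf_ne_zero hqm (norm_pow_lt_one hq ha))
      (qPochInf_ne_zero hqm (norm_pow_lt_one hq (by omega))))
    (qPochInf_ne_zero hqm hqm)

lemma tsum_zpow_eq_JBar (hq0 : q ≠ 0) (hq : ‖q‖ < 1) (hm : m ≠ 0) (ham : a ≤ m) :
    ∑' n : ℤ, q ^ (m * (n * (n + 1) / 2) - a * n) = JBar q a m := by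
  have triple_product := tsum_triPow_mul_zpow (pow_ne_zero m hq0) (norm_pow_lt_one hq hm)
    (inv_ne_zero (pow_ne_zero a hq0))
  have pow_sub_eq : (q ^ a)⁻¹ * q ^ m = q ^ (m - a) := by
    rw [pow_sub₀ q hq0 ham, mul_comm]
  rw [inv_inv, pow_sub_eq] at triple_product
  rw [JBar, mul_comm (qPochInf (-q ^ a) _), ← triple_product]
  refine tsum_congr fun n => ?_
  rw [triPow, zpow_sub₀ hq0, zpow_mul, zpow_mul, inv_zpow, zpow_natCast, zpow_natCast,
    div_eq_mul_inv]

lemma JBar_mul_Jam (hq : ‖q‖ < 1) (a : ℕ) (hm : m ≠ 0) :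
    JBar q a m * Jam q a m * J q (2 * m) = Jam q (2 * a) (2 * m) * J q m ^ 2 := by
  have hqm := norm_pow_lt_one hq hm
  have h₁ := qPochInf_mul_qPochInf_neg hqm (q ^ a)
  have h₂ := qPochInf_mul_qPochInf_neg hqm (q ^ (m - a))
  rw [JBar, Jam, Jam, J, J, ← Nat.mul_sub]
  simp only [mul_comm 2, pow_mul, ← h₁, ← h₂]
  ring

lemma JBar_zero_mul_J (hq : ‖q‖ < 1) (hm : m ≠ 0) : JBar q 0 m * J q m = 2 * J q (2 * m) ^ 2 := by
  have hqm := norm_pow_lt_one hq hm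
  have h := qPochInf_mul_qPochInf_neg hqm (q ^ m)
  simp only [JBar, J, pow_zero, Nat.sub_zero, mul_comm 2 m, pow_mul, ← h,
    qPochInf_eq_one_sub_mul hqm (-1), neg_one_mul]
  ring

lemma Jam_two_mul_mul_J (hq : ‖q‖ < 1) (ha : a ≠ 0) :
    Jam q a (2 * a) * J q (2 * a) = J q a ^ 2 := by
  have h := qPochInf_eq_prod_qPochInf_pow (norm_pow_lt_one hq ha) (q ^ a) two_ne_zero
  simp only [Finset.prod_range_succ, Finset.prod_range_zero, ← pow_mul, ← pow_add] at h
  ring_nf at h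
  rw [Jam, J, J, h, two_mul, Nat.add_sub_cancel]
  ring_nf

lemma Jam_two_mul_three_mul (hq : ‖q‖ < 1) (ha : a ≠ 0) : Jam q (2 * a) (3 * a) = J q a := by
  have h := qPochInf_eq_prod_qPochInf_pow (norm_pow_lt_one hq ha) (q ^ a) three_ne_zero
  simp only [Finset.prod_range_succ, Finset.prod_range_zero, ← pow_mul, ← pow_add] at h
  ring_nf at h
  rw [Jam, J, h, show 3 * a - 2 * a = a by omega]
  ring_nf

lemma JBar_one_two (hq : ‖q‖ < 1) : JBar q 1 2 = J q 2 ^ 5 / (J q 1 ^ 2 * J q 4 ^ 2) := by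
  have h := JBar_mul_Jam hq 1 two_ne_zero
  have h₁ := Jam_two_mul_mul_J hq one_ne_zero
  have h₂ := Jam_two_mul_mul_J hq two_ne_zero
  have hJ₁ := J_ne_zero hq one_ne_zero
  have hJ₄ := J_ne_zero hq four_ne_zero
  norm_num only at h h₁ h₂
  rw [eq_div_iff (mul_ne_zero (pow_ne_zero 2 hJ₁) (pow_ne_zero 2 hJ₄))]
  linear_combination J q 2 * J q 4 * h - JBar q 1 2 * J q 4 ^ 2 * h₁ + J q 2 ^ 3 * h₂

lemma JBar_zero_two (hq : ‖q‖ < 1) : JBar q 0 2 = 2 * J q 4 ^ 2 / J q 2 :=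
  eq_div_of_mul_eq (J_ne_zero hq two_ne_zero) (JBar_zero_mul_J hq two_ne_zero)

lemma JBar_one_six (hq : ‖q‖ < 1) :
    JBar q 1 6 = J q 6 ^ 2 * Jam q 2 12 / (J q 12 * Jam q 1 6) := by
  have h := JBar_mul_Jam hq 1 (m := 6) (by omega)
  have hJ := J_ne_zero hq (m := 12) (by omega)
  have hJam := Jam_ne_zero hq (a := 1) (m := 6) (by omega) (by omega)
  norm_num only at h
  rw [eq_div_iff (mul_ne_zero hJ hJam)]
  linear_combination h

lemma JBar_four_six (hq : ‖q‖ < 1) : JBar q 4 6 = J q 4 * J q 6 ^ 2 / (J q 2 * J q 12) := by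
  have h := JBar_mul_Jam hq 4 (m := 6) (by omega)
  have hJ₂ := J_ne_zero hq (m := 2) (by omega)
  have hJ₁₂ := J_ne_zero hq (m := 12) (by omega)
  have h₁ := Jam_two_mul_three_mul hq two_ne_zero
  have h₂ := Jam_two_mul_three_mul hq four_ne_zero
  norm_num only at h h₁ h₂
  rw [eq_div_iff (mul_ne_zero hJ₂ hJ₁₂), ← h₁, ← h₂]
  linear_combination h

/-- The row of the hexagonal theta series with first index `a`. -/
noncomputable def hexRow (q : ℂ) (a : ℤ) : ℂ :=
  ∑' b : ℤ, triPow q a * triPow q b * triPow q (a + b)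

lemma hexRow_neg_two_mul (hq0 : q ≠ 0) (s : ℤ) :
    hexRow q (-(2 * s)) = q ^ ((6 : ℕ) * (s * (s + 1) / 2) - (4 : ℕ) * s) *
      ∑' e : ℤ, q ^ ((2 : ℕ) * (e * (e + 1) / 2) - (0 : ℕ) * e) := by
  rw [hexRow, ← tsum_mul_left, ← tsum_comp_sub_right _ (-s)]
  refine tsum_congr fun e => ?_
  rw [show -(2 * s) + (e - -s) = e - s by ring, triPow_neg]
  simp only [triPow, ← zpow_add₀ hq0]
  congr 1
  push_cast
  linarith [two_mul_triangular (2 * s - 1), two_mul_triangular (e - -s),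
    two_mul_triangular (e - s), two_mul_triangular s, two_mul_triangular e]

lemma hexRow_neg_two_mul_add_one (hq0 : q ≠ 0) (s : ℤ) :
    hexRow q (-(2 * s + 1)) = q ^ ((6 : ℕ) * (s * (s + 1) / 2) - (1 : ℕ) * s) *
      ∑' e : ℤ, q ^ ((2 : ℕ) * (e * (e + 1) / 2) - (1 : ℕ) * e) := by
  rw [hexRow, ← tsum_mul_left, ← tsum_comp_sub_right _ (-s)]
  refine tsum_congr fun e => ?_
  rw [show -(2 * s + 1) + (e - -s) = e - s - 1 by ring, triPow_neg, add_sub_cancel_right]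
  simp only [triPow, ← zpow_add₀ hq0]
  congr 1
  push_cast
  linarith [two_mul_triangular (2 * s), two_mul_triangular (e - -s),
    two_mul_triangular (e - s - 1), two_mul_triangular s, two_mul_triangular e]

lemma hexTheta_triPow (hq0 : q ≠ 0) (hq : ‖q‖ < 1) :
    hexTheta q (triPow q) = JBar q 4 6 * JBar q 0 2 + JBar q 1 6 * JBar q 1 2 := by
  have s := summable_hexTheta hq0 hq (summable_triPow hq0 hq)
  have summable_hexRow : Summable (hexRow q) := s.prod
  have summable_neg : Summable fun a => hexRow q (-a) :=
    (Equiv.neg ℤ).summable_iff.2 summable_hexRow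
  have summable_even : Summable fun s : ℤ => hexRow q (-(2 * s)) :=
    summable_neg.comp_injective fun _ _ h => by simpa using h
  have summable_odd : Summable fun s : ℤ => hexRow q (-(2 * s + 1)) :=
    summable_neg.comp_injective fun _ _ h => by simpa using h
  calc hexTheta q (triPow q) = ∑' a, hexRow q a := s.tsum_prod
    _ = ∑' a, hexRow q (-a) := ((Equiv.neg ℤ).tsum_eq (hexRow q)).symm
    _ = ∑' s, hexRow q (-(2 * s)) + ∑' s, hexRow q (-(2 * s + 1)) :=
        (tsum_int_even_add_odd (f := fun a => hexRow q (-a)) summable_even summable_odd).symm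
    _ = JBar q 4 6 * JBar q 0 2 + JBar q 1 6 * JBar q 1 2 := by
        simp only [hexRow_neg_two_mul hq0, hexRow_neg_two_mul_add_one hq0, tsum_mul_right]
        rw [tsum_zpow_eq_JBar hq0 hq (by omega) (by omega),
          tsum_zpow_eq_JBar hq0 hq (by omega) (by omega),
          tsum_zpow_eq_JBar hq0 hq (by omega) (by omega),
          tsum_zpow_eq_JBar hq0 hq (by omega) (by omega)]

end ThetaProducts

theorem stmt_12 (q : ℂ) (h0 : 0 < ‖q‖) (h1 : ‖q‖ < 1) :
    (∑' p : ℕ × ℕ × ℕ × ℕ,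
      (fun (i j k l : ℕ) =>
        q ^ (((i:ℤ)^2 + (j:ℤ)^2 + (k:ℤ)^2 + (l:ℤ)^2 - (i:ℤ)*(j:ℤ) - (i:ℤ)*(k:ℤ) - (i:ℤ)*(l:ℤ) + (j:ℤ)*(k:ℤ) + (j:ℤ)*(l:ℤ) + (i:ℤ) - (k:ℤ)) : ℤ) /
          (qPoch (q ^ 1) (q ^ 1) i * qPoch (q ^ 1) (q ^ 1) j * qPoch (q ^ 1) (q ^ 1) k * qPoch (q ^ 1) (q ^ 1) l))
        p.1 p.2.1 p.2.2.1 p.2.2.2)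
    = (2/3) * ((J q 6)^2 / ((J q 1)^2 * J q 12)) *
      ((J q 2)^5 * Jam q 2 12 / ((J q 1)^2 * (J q 4)^2 * Jam q 1 6)
        + 2 * (J q 4)^3 / (J q 2)^2) := by
  have hq0 : q ≠ 0 := norm_pos_iff.1 h0
  have lhs_eq := (tsum_fourfoldTerm_natCast q).trans
    ((tsum_fourfoldTerm hq0 h1).trans (convPairing_diffSum_antidiagSum hq0 h1))
  simp only [fourfoldTerm_natCast] at lhs_eq
  have hJ₁ : qPochInf q q = J q 1 := by rw [J, pow_one]
  have hJ₁_ne : J q 1 ≠ 0 := J_ne_zero h1 one_ne_zero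
  have hJ₂_ne : J q 2 ≠ 0 := J_ne_zero h1 two_ne_zero
  have hJ₄_ne : J q 4 ≠ 0 := J_ne_zero h1 four_ne_zero
  have hJ₁₂_ne : J q 12 ≠ 0 := J_ne_zero h1 (by omega)
  have hJam_ne : Jam q 1 6 ≠ 0 := Jam_ne_zero h1 one_ne_zero (by omega)
  simp only [pow_one]
  rw [lhs_eq, hexTheta_triPow hq0 h1, JBar_four_six h1, JBar_zero_two h1, JBar_one_six h1,
    JBar_one_two h1, hJ₁]
  field_simp
  ring
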